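/- arXiv:1209.5840 — 3 statements merged into one kernel-verified Lean document; each statement's English description precedes it below -/
import Mathlib

section
/- Let 0 < p < ∞, σ > 0, and let (a_j)_{j≥0} be a sequence of nonnegative reals. Then there is a constant c > 0 depending only on p and σ such that Σ_{j=0}^∞ 2^{σj} (Σ_{i=j}^∞ a_i)^p ≤ c Σ_{j=0}^∞ 2^{σj} a_j^p (as an inequality in [0,∞]). -/
open scoped ENNReal NNReal

/-!
Insert a geometric factor `x ^ i` into the tail sum `∑ i, a (j + i)` and bound each remaining
factor by the `ℓ^p` norm; this replaces Hölder's inequality and works for every `p > 0`. What is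
left is a convolution of the sequence `q ^ k * a k ^ p` with a second geometric sequence `y ^ i`,
where `y * q * x ^ p = 1`. Splitting the decay evenly, `x ^ p = y = q ^ (-1 / 2)`, makes both
geometric series converge.
-/

lemma rpow_tsum_mul_le {ι : Type*} {p : ℝ} (hp : 0 < p) (w b : ι → ℝ≥0∞) :
    (∑' i, w i * b i) ^ p ≤ (∑' i, w i) ^ p * ∑' i, b i ^ p := by
  have le_norm (i : ι) : b i ≤ (∑' k, b k ^ p) ^ p⁻¹ :=
    (ENNReal.le_rpow_inv_iff hp).2 (ENNReal.le_tsum i)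
  calc (∑' i, w i * b i) ^ p
      ≤ (∑' i, w i * (∑' k, b k ^ p) ^ p⁻¹) ^ p := by gcongr with i; exact le_norm i
    _ = (∑' i, w i) ^ p * ∑' i, b i ^ p := by
      rw [ENNReal.tsum_mul_right, ENNReal.mul_rpow_of_nonneg _ _ hp.le,
        ENNReal.rpow_inv_rpow hp.ne']

lemma tsum_tsum_mul_add_le {M : Type*} [Add M] [IsRightCancelAdd M] (w f : M → ℝ≥0∞) :
    ∑' j, ∑' i, w i * f (j + i) ≤ (∑' i, w i) * ∑' k, f k := by
  rw [ENNReal.tsum_comm, ← ENNReal.tsum_mul_right]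
  simp_rw [ENNReal.tsum_mul_left]
  gcongr ∑' i, _ * ?_ with i
  exact ENNReal.tsum_comp_le_tsum_of_injective (add_left_injective i) f

lemma rpow_tsum_le_geometric_mul {p : ℝ} (hp : 0 < p) {x : ℝ≥0∞} (hx₀ : x ≠ 0) (hx : x ≠ ⊤)
    (b : ℕ → ℝ≥0∞) :
    (∑' i, b i) ^ p ≤ ((1 - x)⁻¹) ^ p * ∑' i, ((x ^ p)⁻¹) ^ i * b i ^ p := by
  have split (i : ℕ) : b i = x ^ i * ((x⁻¹) ^ i * b i) := by
    rw [← mul_assoc, ← mul_pow, ENNReal.mul_inv_cancel hx₀ hx, one_pow, one_mul]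
  have rpow_factor (i : ℕ) : ((x⁻¹) ^ i * b i) ^ p = ((x ^ p)⁻¹) ^ i * b i ^ p := by
    rw [ENNReal.mul_rpow_of_nonneg _ _ hp.le, ← ENNReal.inv_rpow, ← ENNReal.rpow_natCast_mul,
      mul_comm (i : ℝ), ENNReal.rpow_mul_natCast]
  calc (∑' i, b i) ^ p
      = (∑' i, x ^ i * ((x⁻¹) ^ i * b i)) ^ p := by simp_rw [← split]
    _ ≤ (∑' i, x ^ i) ^ p * ∑' i, ((x⁻¹) ^ i * b i) ^ p := rpow_tsum_mul_le hp _ _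
    _ = ((1 - x)⁻¹) ^ p * ∑' i, ((x ^ p)⁻¹) ^ i * b i ^ p := by
      simp_rw [rpow_factor, ENNReal.tsum_geometric]

lemma tsum_pow_mul_rpow_tsum_add_le {p : ℝ} (hp : 0 < p) {q x y : ℝ≥0∞}
    (hxyq : y * q * x ^ p = 1) (a : ℕ → ℝ≥0∞) :
    ∑' j, q ^ j * (∑' i, a (j + i)) ^ p ≤
      ((1 - x)⁻¹) ^ p * (1 - y)⁻¹ * ∑' j, q ^ j * a j ^ p := by
  have hyq : (x ^ p)⁻¹ = y * q := (ENNReal.eq_inv_of_mul_eq_one_left hxyq).symm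
  have hx₀ : x ≠ 0 := by rintro rfl; simp [hp] at hxyq
  have hx : x ≠ ⊤ := by rintro rfl; simp [← hyq, hp] at hxyq
  have regroup (j i : ℕ) : q ^ j * ((y * q) ^ i * a (j + i) ^ p) =
      y ^ i * (q ^ (j + i) * a (j + i) ^ p) := by ring
  calc ∑' j, q ^ j * (∑' i, a (j + i)) ^ p
      ≤ ∑' j, q ^ j * (((1 - x)⁻¹) ^ p * ∑' i, (y * q) ^ i * a (j + i) ^ p) := by
        gcongr with j
        exact hyq ▸ rpow_tsum_le_geometric_mul hp hx₀ hx fun i ↦ a (j + i)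
    _ = ((1 - x)⁻¹) ^ p * ∑' j, ∑' i, y ^ i * (q ^ (j + i) * a (j + i) ^ p) := by
        simp_rw [mul_left_comm (q ^ _), ENNReal.tsum_mul_left, ← regroup, ENNReal.tsum_mul_left]
    _ ≤ ((1 - x)⁻¹) ^ p * ((∑' i, y ^ i) * ∑' k, q ^ k * a k ^ p) := by
        gcongr
        exact tsum_tsum_mul_add_le (fun i ↦ y ^ i) fun k ↦ q ^ k * a k ^ p
    _ = ((1 - x)⁻¹) ^ p * (1 - y)⁻¹ * ∑' j, q ^ j * a j ^ p := by
        rw [ENNReal.tsum_geometric, mul_assoc]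

theorem hardy_inequality_sums_general {p : ℝ} (hp : 0 < p) {q : ℝ≥0∞} (hq : 1 < q) (hq' : q ≠ ⊤) :
    ∃ c > 0, ∀ a : ℕ → ℝ≥0∞,
      ∑' j, q ^ j * (∑' i, a (j + i)) ^ p ≤ ENNReal.ofReal c * ∑' j, q ^ j * a j ^ p := by
  have hq₀ : q ≠ 0 := (zero_lt_one.trans hq).ne'
  set x := q ^ (-(1 / (2 * p)))
  set y := q ^ (-(1 / 2) : ℝ)
  have hx : x < 1 := ENNReal.rpow_lt_one_of_one_lt_of_neg hq (neg_lt_zero.2 (by positivity))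
  have hy : y < 1 := ENNReal.rpow_lt_one_of_one_lt_of_neg hq (by norm_num)
  have hxyq : y * q * x ^ p = 1 := by
    calc y * q * x ^ p = q ^ (-(1 / 2) + 1 + -(1 / (2 * p)) * p) := by
          rw [ENNReal.rpow_add _ _ hq₀ hq', ENNReal.rpow_add _ _ hq₀ hq', ENNReal.rpow_mul,
            ENNReal.rpow_one]
      _ = q ^ (0 : ℝ) := by congr 1; field_simp; norm_num
      _ = 1 := ENNReal.rpow_zero
  have inv_ne_zero (z : ℝ≥0∞) : (1 - z)⁻¹ ≠ 0 := by simp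
  have inv_ne_top {z : ℝ≥0∞} (hz : z < 1) : (1 - z)⁻¹ ≠ ⊤ :=
    ENNReal.inv_ne_top.2 (tsub_pos_of_lt hz).ne'
  set C := ((1 - x)⁻¹) ^ p * (1 - y)⁻¹
  have hC : C ≠ ⊤ :=
    ENNReal.mul_ne_top (ENNReal.rpow_ne_top_of_nonneg hp.le (inv_ne_top hx)) (inv_ne_top hy)
  have hC₀ : C ≠ 0 := mul_ne_zero
    (ENNReal.rpow_pos (pos_iff_ne_zero.2 (inv_ne_zero x)) (inv_ne_top hx)).ne' (inv_ne_zero y)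
  refine ⟨C.toReal, ENNReal.toReal_pos hC₀ hC, fun a ↦ ?_⟩
  rw [ENNReal.ofReal_toReal hC]
  exact tsum_pow_mul_rpow_tsum_add_le hp hxyq a

/-- **Hardy's inequality for sums** (Lemma 2.1): for `0 < p < ∞` and `σ > 0` there is a
constant `c > 0`, depending only on `p` and `σ`, such that for every sequence of
nonnegative reals `(a_j)`,
`Σ_{j} 2^{σj} (Σ_{i=j}^∞ a_i)^p ≤ c Σ_{j} 2^{σj} a_j^p` (in `[0,∞]`). -/
theorem hardy_inequality_sums (p σ : ℝ) (hp : 0 < p) (hσ : 0 < σ) :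
    ∃ c > 0, ∀ a : ℕ → ℝ≥0,
      ∑' j : ℕ, (2 : ℝ≥0∞) ^ (σ * j) * (∑' i : ℕ, (a (j + i) : ℝ≥0∞)) ^ p ≤
        ENNReal.ofReal c * ∑' j : ℕ, (2 : ℝ≥0∞) ^ (σ * j) * (a j : ℝ≥0∞) ^ p := by
  obtain ⟨c, hc, hardy⟩ := hardy_inequality_sums_general hp
    (ENNReal.one_lt_rpow ENNReal.one_lt_two hσ) (ENNReal.rpow_ne_top_of_nonneg hσ.le (by simp))
  exact ⟨c, hc, fun a ↦ by simpa only [ENNReal.rpow_mul, ENNReal.rpow_natCast] using hardy (a ·)⟩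
end

section
/- Let S ⊆ ℝⁿ be a nonempty closed κ-porous set and let 𝒲_S be a Whitney decomposition of ℝⁿ ∖ S. Then for every x ∈ S and every i ∈ ℕ there exists Q ∈ 𝒲_S such that 2^{−(i+1)}/(5κ) ≤ diam(Q) ≤ 2^{−(i+1)} and Q ⊆ Q(x, 2^{−i}). -/
open MeasureTheory Metric Set Filter
open scoped ENNReal NNReal Topology

noncomputable section

/-- ℝⁿ, with the sup-norm (given by the product metric on `Fin n → ℝ`). -/
abbrev Rn (n : ℕ) := Fin n → ℝ

/-- `S` is `κ`-porous. -/
def IsPorous {n : ℕ} (κ : ℝ) (S : Set (Rn n)) : Prop :=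
  1 ≤ κ ∧ ∀ (x : Rn n) (r : ℝ), 0 < r → r ≤ 1 →
    ∃ y ∈ closedBall x r, closedBall y (r / κ) ∩ S = ∅

/-- The closed dyadic cube `2^{−j}(m + [0,1]ⁿ)`. Its sup-norm diameter is `2^{−j}`. -/
def dyadicCube {n : ℕ} (j : ℤ) (m : Fin n → ℤ) : Set (Rn n) :=
  {y | ∀ i, (m i : ℝ) * 2 ^ (-j) ≤ y i ∧ y i ≤ ((m i : ℝ) + 1) * 2 ^ (-j)}

/-- `W` (a family of dyadic cubes, indexed by `(j,m)` with side `2^{−j}`) is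
a Whitney decomposition of `ℝⁿ ∖ S`: the cubes have pairwise disjoint interiors, their
union is `ℝⁿ ∖ S`, and `diam(Q) ≤ dist(Q,S) ≤ 4 diam(Q)` in the sup-norm (recall
`dist(Q,S) = inf_{p∈Q} dist(p,S)` and that the sup-norm diameter of `Q` is `2^{−j}`). -/
def IsWhitney {n : ℕ} (S : Set (Rn n)) (W : Set (ℤ × (Fin n → ℤ))) : Prop :=
  (∀ Q ∈ W, ∀ Q' ∈ W, Q ≠ Q' →
      interior (dyadicCube Q.1 Q.2) ∩ interior (dyadicCube Q'.1 Q'.2) = ∅) ∧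
  (⋃ Q ∈ W, dyadicCube Q.1 Q.2) = Sᶜ ∧
  (∀ Q ∈ W, (∀ x ∈ dyadicCube Q.1 Q.2, (2:ℝ) ^ (-Q.1) ≤ infDist x S) ∧
      (∃ x ∈ dyadicCube Q.1 Q.2, infDist x S ≤ 4 * (2:ℝ) ^ (-Q.1)))

/-!
Porosity at a point `x ∈ S` and scale `r` gives a point `y` within `r` of `x` whose distance to `S`
lies between `r / κ` and `r`. On the Whitney cube `Q` containing `y` the distance to `S` is
comparable to the size of `Q`: it is at least that size and at most five times that size, four
coming from the definition and one from the diameter. Hence the size of `Q` lies between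
`r / (5κ)` and `r`, and `Q` stays within `2r` of `x`.
-/

theorem le_infDist_iff_disjoint_ball {X : Type*} [PseudoMetricSpace X] {S : Set X}
    (hS : S.Nonempty) {y : X} {ρ : ℝ} : ρ ≤ infDist y S ↔ Disjoint (ball y ρ) S := by
  simp only [le_infDist hS, disjoint_right, mem_ball', not_lt]

/-- The metric content of a Whitney decomposition of `Sᶜ`, in any pseudometric space: sets `Q k`,
`k ∈ W`, cover `Sᶜ`, and the distance of `Q k` to `S` lies between `ℓ k` and `4 * ℓ k`. The size
`ℓ k` is a datum bounding the diameter of `Q k`, for cubes their side length: in dimension zero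
this differs from `Metric.diam`. -/
structure IsWhitneyCover {X ι : Type*} [PseudoMetricSpace X] (S : Set X) (W : Set ι)
    (Q : ι → Set X) (ℓ : ι → ℝ) : Prop where
  exists_mem : ∀ y ∉ S, ∃ k ∈ W, y ∈ Q k
  dist_le : ∀ k ∈ W, ∀ y ∈ Q k, ∀ z ∈ Q k, dist y z ≤ ℓ k
  le_infDist : ∀ k ∈ W, ∀ y ∈ Q k, ℓ k ≤ infDist y S
  exists_infDist_le : ∀ k ∈ W, ∃ y ∈ Q k, infDist y S ≤ 4 * ℓ k

namespace IsWhitneyCover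

variable {X ι : Type*} [PseudoMetricSpace X] {S : Set X} {W : Set ι} {Q : ι → Set X} {ℓ : ι → ℝ}

theorem infDist_le_five_mul (hW : IsWhitneyCover S W Q ℓ) {k : ι} (hk : k ∈ W) {y : X}
    (hy : y ∈ Q k) : infDist y S ≤ 5 * ℓ k := by
  obtain ⟨p, hp, hpS⟩ := hW.exists_infDist_le k hk
  calc
    infDist y S ≤ infDist p S + dist y p := infDist_le_infDist_add_dist
    _ ≤ 4 * ℓ k + ℓ k := add_le_add hpS (hW.dist_le k hk y hy p hp)
    _ = 5 * ℓ k := by ring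

theorem subset_closedBall (hW : IsWhitneyCover S W Q ℓ) {k : ι} (hk : k ∈ W) {y : X}
    (hy : y ∈ Q k) (x : X) : Q k ⊆ closedBall x (ℓ k + dist y x) := fun z hz =>
  (dist_triangle z y x).trans (by gcongr; exact hW.dist_le k hk z hz y hy)

end IsWhitneyCover

theorem whitney_cube_near_porous_general {X ι : Type*} [PseudoMetricSpace X] {S : Set X}
    {W : Set ι} {Q : ι → Set X} {ℓ : ι → ℝ} (hW : IsWhitneyCover S W Q ℓ) {x : X} (hx : x ∈ S)
    {κ r : ℝ} (hκ : 0 < κ) (hpor : ∃ y ∈ closedBall x r, closedBall y (r / κ) ∩ S = ∅) :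
    ∃ k ∈ W, r / (5 * κ) ≤ ℓ k ∧ ℓ k ≤ r ∧ Q k ⊆ closedBall x (2 * r) := by
  obtain ⟨y, hyx : dist y x ≤ r, hyS⟩ := hpor
  rw [← disjoint_iff_inter_eq_empty] at hyS
  have hr : 0 ≤ r := dist_nonneg.trans hyx
  have y_notMem : y ∉ S := hyS.notMem_of_mem_left (mem_closedBall_self (by positivity))
  have le_infDist_y : r / κ ≤ infDist y S :=
    (le_infDist_iff_disjoint_ball ⟨x, hx⟩).2 (hyS.mono_left ball_subset_closedBall)
  obtain ⟨k, hk, hy⟩ := hW.exists_mem y y_notMem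
  have size_le : ℓ k ≤ r := (hW.le_infDist k hk y hy).trans ((infDist_le_dist_of_mem hx).trans hyx)
  refine ⟨k, hk, ?_, size_le, ?_⟩
  · rw [mul_comm, ← div_div, div_le_iff₀' (by norm_num)]
    exact le_infDist_y.trans (hW.infDist_le_five_mul hk hy)
  · exact (hW.subset_closedBall hk hy x).trans (closedBall_subset_closedBall (by linarith))

theorem dist_le_of_mem_dyadicCube {n : ℕ} {j : ℤ} {m : Fin n → ℤ} {y z : Rn n}
    (hy : y ∈ dyadicCube j m) (hz : z ∈ dyadicCube j m) : dist y z ≤ (2 : ℝ) ^ (-j) := by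
  refine (dist_pi_le_iff (by positivity)).2 fun i => ?_
  calc
    dist (y i) (z i) ≤ (m i + 1) * 2 ^ (-j) - m i * 2 ^ (-j) :=
      Real.dist_le_of_mem_Icc (hy i) (hz i)
    _ = 2 ^ (-j) := by ring

theorem IsWhitney.isWhitneyCover {n : ℕ} {S : Set (Rn n)} {W : Set (ℤ × (Fin n → ℤ))}
    (hW : IsWhitney S W) :
    IsWhitneyCover S W (fun Q => dyadicCube Q.1 Q.2) (fun Q => (2 : ℝ) ^ (-Q.1)) where
  exists_mem y hy := by
    obtain ⟨Q, hQ, hyQ⟩ := mem_iUnion₂.1 (hW.2.1.superset hy)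
    exact ⟨Q, hQ, hyQ⟩
  dist_le _ _ _ hy _ hz := dist_le_of_mem_dyadicCube hy hz
  le_infDist Q hQ := (hW.2.2 Q hQ).1
  exists_infDist_le Q hQ := (hW.2.2 Q hQ).2

/-- **Whitney cubes near porous sets** (Lemma 2.11). If `S ⊆ ℝⁿ` is a nonempty closed
`κ`-porous set with Whitney decomposition `𝒲_S`, then for every `x ∈ S` and `i ∈ ℕ`
there is `Q ∈ 𝒲_S` with `2^{−(i+1)}/(5κ) ≤ diam(Q) ≤ 2^{−(i+1)}` and
`Q ⊆ Q(x, 2^{−i})`. -/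
theorem whitney_cube_near_porous {n : ℕ} (S : Set (Rn n)) (hne : S.Nonempty)
    (hcl : IsClosed S) (κ : ℝ) (hpor : IsPorous κ S)
    (W : Set (ℤ × (Fin n → ℤ))) (hW : IsWhitney S W) :
    ∀ x ∈ S, ∀ i : ℕ, ∃ Q ∈ W,
      (2:ℝ) ^ (-(i:ℤ) - 1) / (5 * κ) ≤ (2:ℝ) ^ (-Q.1) ∧
      (2:ℝ) ^ (-Q.1) ≤ (2:ℝ) ^ (-(i:ℤ) - 1) ∧
      dyadicCube Q.1 Q.2 ⊆ closedBall x ((2:ℝ) ^ (-(i:ℤ))) := by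
  intro x hx i
  have scale_le_one : (2 : ℝ) ^ (-(i : ℤ) - 1) ≤ 1 :=
    zpow_le_one_of_nonpos₀ one_le_two (by lia)
  have two_mul_scale : 2 * (2 : ℝ) ^ (-(i : ℤ) - 1) = 2 ^ (-(i : ℤ)) := by
    rw [← zpow_one_add₀ two_ne_zero, add_sub_cancel]
  rw [← two_mul_scale]
  exact whitney_cube_near_porous_general hW.isWhitneyCover hx (zero_lt_one.trans_le hpor.1)
    (hpor.2 x _ (by positivity) scale_le_one)
end
end

section
/- Every d-set S ⊆ ℝⁿ with 0 < d < n is porous: there exists κ ≥ 1 (depending on n, d and the regularity constant of S) such that for every x ∈ ℝⁿ and every 0 < r ≤ 1 there is a point y ∈ Q(x,r) with Q(y, r/κ) ∩ S = ∅. -/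
open MeasureTheory Metric Set Filter
open scoped ENNReal NNReal Topology

noncomputable section

/-- `S` is an (Ahlfors) `d`-set with regularity constant `C`. -/
def IsDSet {n : ℕ} (S : Set (Rn n)) (d C : ℝ) : Prop :=
  IsClosed S ∧ 1 < C ∧ ∀ w ∈ S, ∀ r : ℝ, 0 < r → r ≤ 1 →
    ENNReal.ofReal (C⁻¹ * r ^ d) ≤ μH[d] (closedBall w r ∩ S) ∧
      μH[d] (closedBall w r ∩ S) ≤ ENNReal.ofReal (C * r ^ d)

/-!
If `S` met every ball of radius `t` centred in a ball `B` of radius `r / 4`, then a maximal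
`2t`-separated subset of the part of `S` near `B` would be a `3t`-net of `B`. Comparing volumes in
the `D`-regular ambient space, such a net has at least a multiple of `(r / t) ^ D` points. The balls
of radius `t` about its points are disjoint and lie in a ball of radius `r` about a point of `S`, so
by `d`-regularity of `S` there are at most a multiple of `(r / t) ^ d` of them. As `d < D`, this
bounds `r / t`.
-/

/-- `μ` is Ahlfors `d`-regular at the points of `S`, up to scale `1` and with constant `C`. For a
set `S` that is a `d`-set, `μ` is the restriction of the Hausdorff measure to `S`; the ambient space
is described by `S = univ`. -/
structure AhlforsRegularOn {X : Type*} [PseudoMetricSpace X] [MeasurableSpace X]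
    (μ : Measure X) (S : Set X) (d C : ℝ) : Prop where
  const_pos : 0 < C
  le_measure : ∀ w ∈ S, ∀ r : ℝ, 0 < r → r ≤ 1 → ENNReal.ofReal (C⁻¹ * r ^ d) ≤ μ (closedBall w r)
  measure_le : ∀ w ∈ S, ∀ r : ℝ, 0 < r → r ≤ 1 → μ (closedBall w r) ≤ ENNReal.ofReal (C * r ^ d)

/-- Porosity of `S` with constant `κ`, at scales at most `1`: every closed ball of radius `r` has a
point whose closed ball of radius `r / κ` misses `S`. -/
def PorousWith {X : Type*} [PseudoMetricSpace X] (κ : ℝ) (S : Set X) : Prop :=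
  ∀ (x : X) (r : ℝ), 0 < r → r ≤ 1 → ∃ y ∈ closedBall x r, closedBall y (r / κ) ∩ S = ∅

section Covering

variable {X : Type*} [PseudoMetricSpace X] {A N S T : Set X} {δ ε : ℝ≥0}

lemma isCover_trans (hT : IsCover δ A T) (hN : IsCover ε T N) : IsCover (δ + ε) A N := by
  intro x hx
  obtain ⟨y, hy, hxy⟩ := hT hx
  obtain ⟨z, hz, hyz⟩ := hN hy
  refine ⟨z, hz, ?_⟩
  calc edist x z ≤ edist x y + edist y z := edist_triangle x y z
    _ ≤ δ + ε := add_le_add hxy hyz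
    _ = ↑(δ + ε) := (ENNReal.coe_add δ ε).symm

lemma isCover_inter_closedBall {x : X} {r : ℝ} (hS : IsCover δ (closedBall x r) S) :
    IsCover δ (closedBall x r) (S ∩ closedBall x (r + δ)) := by
  intro y hy
  obtain ⟨w, hw, hyw⟩ := hS hy
  refine ⟨w, ⟨hw, ?_⟩, hyw⟩
  have hwy : dist w y ≤ δ := by simpa [dist_comm] using hyw
  calc dist w x ≤ dist w y + dist y x := dist_triangle w y x
    _ ≤ r + δ := by linarith [mem_closedBall.1 hy]

variable [MeasurableSpace X] {μ ν : Measure X} {m M : ℝ≥0∞}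

lemma measure_le_encard_mul_of_isCover (hN : N.Countable) (hA : IsCover ε A N)
    (hM : ∀ x ∈ N, ν (closedBall x ε) ≤ M) : ν A ≤ N.encard * M :=
  calc ν A ≤ ν (⋃ x ∈ N, closedBall x ε) := measure_mono hA.subset_iUnion_closedBall
    _ ≤ ∑' x : N, ν (closedBall x ε) := measure_biUnion_le ν hN _
    _ ≤ ∑' _ : N, M := ENNReal.tsum_le_tsum fun x ↦ hM x x.2
    _ = N.encard * M := ENNReal.tsum_set_const N M

lemma measure_le_coveringNumber_mul (hT : IsCover δ A T) (hM₀ : M ≠ 0)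
    (hM : ∀ x ∈ T, ν (closedBall x (δ + ε)) ≤ M) : ν A ≤ coveringNumber ε T * M := by
  by_cases htop : coveringNumber ε T = ⊤
  · simp [htop, ENNReal.top_mul hM₀]
  · obtain ⟨N, hNT, hNfin, hN, hcard⟩ := exists_set_encard_eq_coveringNumber htop
    rw [← hcard]
    exact measure_le_encard_mul_of_isCover hNfin.countable (isCover_trans hT hN)
      fun x hx ↦ by simpa using hM x (hNT hx)

variable [OpensMeasurableSpace X]

lemma encard_mul_le_measure_of_isSeparated (hN : IsSeparated ↑(2 * ε) N)
    (hm : ∀ x ∈ N, m ≤ μ (closedBall x ε)) :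
    N.encard * m ≤ μ (⋃ x ∈ N, closedBall x ε) := by
  have hdisj : Pairwise (Function.onFun Disjoint fun x : N ↦ closedBall (x : X) ε) := by
    intro x y hxy
    have hsep : ↑(2 * ε) < edist (x : X) y := hN x.2 y.2 (Subtype.coe_ne_coe.2 hxy)
    rw [edist_nndist, ENNReal.coe_lt_coe, ← NNReal.coe_lt_coe, coe_nndist] at hsep
    exact closedBall_disjoint_closedBall (by simpa [two_mul] using hsep)
  calc N.encard * m = ∑' _ : N, m := (ENNReal.tsum_set_const N m).symm
    _ ≤ ∑' x : N, μ (closedBall x ε) := ENNReal.tsum_le_tsum fun x ↦ hm x x.2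
    _ ≤ μ (⋃ x : N, closedBall x ε) :=
      tsum_meas_le_meas_iUnion_of_disjoint μ (fun _ ↦ measurableSet_closedBall) hdisj
    _ = μ (⋃ x ∈ N, closedBall x ε) := by rw [biUnion_eq_iUnion]

lemma packingNumber_mul_le_measure (hm : ∀ x ∈ T, m ≤ μ (closedBall x ε)) :
    packingNumber (2 * ε) T * m ≤ μ (⋃ x ∈ T, closedBall x ε) := by
  simp only [packingNumber, ENat.toENNReal_iSup, ENNReal.iSup_mul, iSup_le_iff]
  intro N hNT hN
  exact (encard_mul_le_measure_of_isSeparated hN fun x hx ↦ hm x (hNT hx)).trans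
    (measure_mono (biUnion_subset_biUnion_left hNT))

lemma measure_mul_le_of_isCover (hT : IsCover δ A T) (hM₀ : M ≠ 0)
    (hM : ∀ x ∈ T, ν (closedBall x (δ + 2 * ε)) ≤ M) (hm : ∀ x ∈ T, m ≤ μ (closedBall x ε)) :
    ν A * m ≤ M * μ (⋃ x ∈ T, closedBall x ε) :=
  calc ν A * m ≤ coveringNumber (2 * ε) T * M * m := by
        gcongr
        exact measure_le_coveringNumber_mul hT hM₀ (by simpa using hM)
    _ ≤ packingNumber (2 * ε) T * M * m := by
        gcongr
        exact coveringNumber_le_packingNumber (2 * ε) T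
    _ = M * (packingNumber (2 * ε) T * m) := by ring
    _ ≤ M * μ (⋃ x ∈ T, closedBall x ε) := by
        gcongr
        exact packingNumber_mul_le_measure hm

end Covering

lemma div_rpow_sub_le_of_mul_le {d D C K r t : ℝ} (hC : 0 < C) (hK : 0 < K) (hr : 0 < r)
    (ht : 0 < t)
    (h : K⁻¹ * (r / 4) ^ D * (C⁻¹ * t ^ d) ≤ K * (3 * t) ^ D * (C * r ^ d)) :
    (r / t) ^ (D - d) ≤ 12 ^ D * K ^ 2 * C ^ 2 := by
  have h12 : (12 : ℝ) ^ D = 3 ^ D * 4 ^ D := by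
    rw [← Real.mul_rpow (by norm_num) (by norm_num)]; norm_num
  rw [Real.div_rpow hr.le (by norm_num), Real.mul_rpow (by norm_num) ht.le] at h
  rw [Real.div_rpow hr.le ht.le, Real.rpow_sub hr, Real.rpow_sub ht, h12]
  field_simp at h ⊢
  linarith

section Porosity

variable {X : Type*} [PseudoMetricSpace X] [MeasurableSpace X] [OpensMeasurableSpace X]
  {μ ν : Measure X} {S : Set X} {d D C K κ : ℝ}

lemma AhlforsRegularOn.div_rpow_le_of_isCover (hμ : AhlforsRegularOn μ S d C)
    (hν : AhlforsRegularOn ν univ D K) {x : X} {r : ℝ} {t : ℝ≥0} (ht : 0 < t) (htr : 6 * t ≤ r)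
    (hr : r ≤ 1) (hS : IsCover t (closedBall x (r / 4)) S) :
    (r / t) ^ (D - d) ≤ 12 ^ D * K ^ 2 * C ^ 2 := by
  have hC := hμ.const_pos
  have hK := hν.const_pos
  have ht' : (0 : ℝ) < t := ht
  have hr₀ : 0 < r := by linarith
  -- Shrinking to radius `r / 4` keeps the comparison ball about `z ∈ S` at radius `r ≤ 1`.
  set T := S ∩ closedBall x (r / 4 + t)
  have hT : IsCover t (closedBall x (r / 4)) T := isCover_inter_closedBall hS
  obtain ⟨z, hzS, hzx⟩ : T.Nonempty := hT.nonempty (nonempty_closedBall.2 (by linarith))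
  have hsub : (⋃ w ∈ T, closedBall w t) ⊆ closedBall z r := by
    refine iUnion₂_subset fun w hw ↦ closedBall_subset_closedBall' ?_
    linarith [dist_triangle_right w z x, mem_closedBall.1 hw.2, mem_closedBall.1 hzx]
  refine div_rpow_sub_le_of_mul_le hC hK hr₀ ht' ?_
  rw [← ENNReal.ofReal_le_ofReal_iff (by positivity), ENNReal.ofReal_mul (by positivity),
    ENNReal.ofReal_mul (p := K * (3 * t) ^ D) (by positivity)]
  calc ENNReal.ofReal (K⁻¹ * (r / 4) ^ D) * ENNReal.ofReal (C⁻¹ * t ^ d)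
    _ ≤ ν (closedBall x (r / 4)) * ENNReal.ofReal (C⁻¹ * t ^ d) := by
        gcongr
        exact hν.le_measure x (mem_univ x) _ (by linarith) (by linarith)
    _ ≤ ENNReal.ofReal (K * (3 * t) ^ D) * μ (⋃ w ∈ T, closedBall w t) := by
        refine measure_mul_le_of_isCover hT (ENNReal.ofReal_pos.2 (by positivity)).ne' ?_ ?_
        · intro w _
          rw [show (t : ℝ) + 2 * t = 3 * t by ring]
          exact hν.measure_le w (mem_univ w) _ (by positivity) (by linarith)
        · exact fun w hw ↦ hμ.le_measure w hw.1 _ ht' (by linarith)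
    _ ≤ ENNReal.ofReal (K * (3 * t) ^ D) * ENNReal.ofReal (C * r ^ d) := by
        gcongr
        exact (measure_mono hsub).trans (hμ.measure_le z hzS r hr₀ hr)

lemma AhlforsRegularOn.porousWith (hμ : AhlforsRegularOn μ S d C)
    (hν : AhlforsRegularOn ν univ D K) (hκ : 6 ≤ κ) (h : 12 ^ D * K ^ 2 * C ^ 2 < κ ^ (D - d)) :
    PorousWith κ S := by
  intro x r hr₀ hr
  by_contra! hmeets
  have hκ₀ : 0 < κ := by linarith
  have hrκ : 0 < r / κ := div_pos hr₀ hκ₀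
  lift r / κ to ℝ≥0 using hrκ.le with t ht
  have hrt : r = κ * t := by rw [ht, mul_div_cancel₀ r hκ₀.ne']
  have hcover : IsCover t (closedBall x (r / 4)) S := by
    intro y hy
    obtain ⟨w, hwy, hwS⟩ := hmeets y (closedBall_subset_closedBall (by linarith) hy)
    exact ⟨w, hwS, by simpa [dist_comm] using hwy⟩
  refine h.not_ge ?_
  calc κ ^ (D - d) = (r / t) ^ (D - d) := by rw [hrt, mul_div_cancel_right₀ _ hrκ.ne']
    _ ≤ 12 ^ D * K ^ 2 * C ^ 2 :=
      hμ.div_rpow_le_of_isCover hν hrκ (by rw [hrt]; gcongr) hr hcover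

theorem dset_porous_general (X : Type*) [PseudoMetricSpace X] [MeasurableSpace X]
    [OpensMeasurableSpace X] {d D : ℝ} (hdD : d < D) (C K : ℝ) :
    ∃ κ : ℝ, 1 ≤ κ ∧ ∀ (μ ν : Measure X) (S : Set X), AhlforsRegularOn μ S d C →
      AhlforsRegularOn ν univ D K → PorousWith κ S := by
  obtain ⟨κ, hlarge, hκ⟩ := (((tendsto_rpow_atTop (sub_pos.2 hdD)).eventually_gt_atTop
    (12 ^ D * K ^ 2 * C ^ 2)).and (eventually_ge_atTop 6)).exists
  exact ⟨κ, by linarith, fun _ _ _ hμ hν ↦ hμ.porousWith hν hκ hlarge⟩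

end Porosity

lemma IsDSet.ahlforsRegularOn {n : ℕ} {S : Set (Rn n)} {d C : ℝ} (hS : IsDSet S d C) :
    AhlforsRegularOn (μH[d].restrict S) S d C := by
  obtain ⟨-, hC, hreg⟩ := hS
  refine ⟨by linarith, fun w hw r hr₀ hr ↦ ?_, fun w hw r hr₀ hr ↦ ?_⟩
  all_goals rw [Measure.restrict_apply measurableSet_closedBall]
  · exact (hreg w hw r hr₀ hr).1
  · exact (hreg w hw r hr₀ hr).2

lemma ahlforsRegularOn_volume (n : ℕ) :
    AhlforsRegularOn (volume : Measure (Rn n)) univ n (2 ^ n) := by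
  have hvol (w : Rn n) {r : ℝ} (hr₀ : 0 < r) :
      volume (closedBall w r) = ENNReal.ofReal (2 ^ n * r ^ (n : ℝ)) := by
    rw [Real.volume_pi_closedBall w hr₀.le, Fintype.card_fin, mul_pow, Real.rpow_natCast]
  have hinv : ((2 : ℝ) ^ n)⁻¹ ≤ 2 ^ n :=
    (inv_le_one_of_one_le₀ (one_le_pow₀ one_le_two)).trans (one_le_pow₀ one_le_two)
  refine ⟨by positivity, fun w _ r hr₀ _ ↦ ?_, fun w _ r hr₀ _ ↦ (hvol w hr₀).le⟩
  rw [hvol w hr₀]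
  gcongr

/-- **`d`-sets with `d < n` are porous** (Remark 2.8). If `S ⊆ ℝⁿ` is a `d`-set with
`0 < d < n`, then there is `κ ≥ 1` such that for every `x ∈ ℝⁿ` and `0 < r ≤ 1` there is
`y ∈ Q(x,r)` with `Q(y, r/κ) ∩ S = ∅`. -/
theorem dset_porous {n : ℕ} (S : Set (Rn n)) (d C₀ : ℝ)
    (hd0 : 0 < d) (hdn : d < n) (hS : IsDSet S d C₀) :
    ∃ κ : ℝ, 1 ≤ κ ∧ ∀ (x : Rn n) (r : ℝ), 0 < r → r ≤ 1 →
      ∃ y ∈ closedBall x r, closedBall y (r / κ) ∩ S = ∅ := by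
  obtain ⟨κ, hκ, hporous⟩ := dset_porous_general (Rn n) hdn C₀ (2 ^ n)
  exact ⟨κ, hκ, hporous _ _ S hS.ahlforsRegularOn (ahlforsRegularOn_volume n)⟩
end
end
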